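/- Let q ≥ 2, t ≥ 1, δ = 2t·q^{2t}·⌈log_2 n⌉, and suppose n ≥ q^{(6t+3−log_q e)/0.4}. Then there exists an injective function EncDen : Σ_q^{n−1} → Σ_q^n such that for every u ∈ Σ_q^{n−1}, the string EncDen(u) is (p,δ)-dense. Equivalently, the number of (p,δ)-dense strings in Σ_q^n is at least q^{n−1}. -/

import Mathlib

/-!
Put `N = q ^ (2t)` and `L = ⌈log₂ n⌉`, so that a window of length `δ = 2t · N · L` splits into
`N · L` disjoint blocks of length `2t`. In a uniformly random word no block of a given window equals
`p` with probability `(1 - 1/N) ^ (N L) ≤ e ^ (-L)`. There are at most `n - 1 < 2 ^ L` windows, and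
`2 (2 ^ L - 1) ≤ e ^ L`, so by the union bound at least half of the `q ^ n` words are dense. This is
at least `q ^ (n - 1)`, which leaves room for an injection.
-/

/-- The pattern `p = 0^t 1^t`: `t` zeros followed by `t` ones. -/
def pat (t : ℕ) : List ℕ := List.replicate t 0 ++ List.replicate t 1

/-- `x` is `(p,δ)`-dense: every substring of `x` of length `δ` contains an
occurrence of `p = 0^t 1^t`. -/
def pdense (t δ : ℕ) (x : List ℕ) : Prop :=
  ∀ a, a + δ ≤ x.length →
    ∃ i, a ≤ i ∧ i + 2 * t ≤ a + δ ∧ (x.drop i).take (2 * t) = pat t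

open Finset

section Density

variable {α : Type*}

/-- `(p,δ)`-density for an arbitrary pattern `p`, with substrings as infixes. -/
def IsDense (p : List α) (δ : ℕ) (x : List α) : Prop :=
  ∀ w, w <:+: x → w.length = δ → p <:+: w

/-- The partition of the window of length `M * m` starting at position `a` into `M` blocks of
length `m`: the pair `(k, j)` goes to position `a + m * k + j` of the word. -/
def windowBlocks {a M m n : ℕ} (h : a + M * m ≤ n) : Fin M × Fin m ↪ Fin n :=
  finProdFinEquiv.toEmbedding.trans ((Fin.natAddEmb a).trans (Fin.castLEEmb h))

lemma isDense_ofFn_of_forall_exists_block_eq {n M : ℕ} {p : List α} {x : Fin n → α}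
    (hx : ∀ a (ha : a + M * p.length ≤ n), ∃ k : Fin M,
      (fun j => x (windowBlocks ha (k, j))) = p.get) :
    IsDense p (M * p.length) (List.ofFn x) := by
  intro w hw hwlen
  obtain ⟨a, ha, hwx⟩ := List.infix_iff_getElem?.mp hw
  rw [hwlen, List.length_ofFn] at ha
  obtain ⟨k, hk⟩ := hx a (by omega)
  refine List.infix_iff_getElem?.mpr ⟨p.length * k, ?_, fun j hj => ?_⟩
  · calc p.length + p.length * k = (k + 1) * p.length := by ring
      _ ≤ M * p.length := Nat.mul_le_mul_right _ k.isLt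
      _ = w.length := hwlen.symm
  · have hj' : j + p.length * k < w.length := hwlen ▸ (finProdFinEquiv (k, ⟨j, hj⟩)).isLt
    have hwj := hwx _ hj'
    rw [List.getElem?_ofFn, dif_pos (by omega), Option.some_inj] at hwj
    rw [List.getElem?_eq_getElem hj', ← hwj, Option.some_inj]
    refine Eq.trans ?_ (congrFun hk ⟨j, hj⟩)
    congr 1
    ext
    simp [windowBlocks, add_comm]

end Density

section Words

variable {α : Type*} {A : Finset α} {n : ℕ}

/-- The words of length `n` over the alphabet `A`, that is `A ^ n` with `n`-tuples as lists. -/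
def words (A : Finset α) (n : ℕ) : Finset (List α) :=
  (Fintype.piFinset fun _ : Fin n => A).map ⟨List.ofFn, List.ofFn_injective⟩

lemma mem_words {x : List α} : x ∈ words A n ↔ x.length = n ∧ ∀ a ∈ x, a ∈ A := by
  simp only [words, mem_map, Fintype.mem_piFinset, Function.Embedding.coeFn_mk]
  constructor
  · rintro ⟨x, hx, rfl⟩
    exact ⟨List.length_ofFn, (List.forall_mem_ofFn_iff (P := (· ∈ A))).mpr hx⟩
  · rintro ⟨rfl, hx⟩
    exact ⟨x.get, fun i => hx _ (x.get_mem i), List.ofFn_get x⟩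

@[simp]
lemma card_words (A : Finset α) (n : ℕ) : #(words A n) = #A ^ n := by
  simp [words]

end Words

section Counting

variable {α : Type*} {A : Finset α}

section Blocks

variable {ι κ τ : Type*} [Fintype ι] [Fintype κ] [Fintype τ]

open Classical in
lemma card_filter_blocks_ne_le (f : κ × τ ↪ ι) {p : τ → α} (hp : ∀ j, p j ∈ A) :
    #{x ∈ Fintype.piFinset fun _ : ι => A | ∀ k, (fun j => x (f (k, j))) ≠ p} ≤
      (#A ^ Fintype.card τ - 1) ^ Fintype.card κ * #A ^ Fintype.card {i // i ∉ Set.range f} := by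
  let blocks : Finset (κ → τ → α) :=
    Fintype.piFinset fun _ => (Fintype.piFinset fun _ => A).erase p
  let rest : Finset ({i // i ∉ Set.range f} → α) := Fintype.piFinset fun _ => A
  have hblocks : #blocks = (#A ^ Fintype.card τ - 1) ^ Fintype.card κ := by
    simp [blocks, card_erase_of_mem (Fintype.mem_piFinset.mpr hp)]
  have hrest : #rest = #A ^ Fintype.card {i // i ∉ Set.range f} := by
    simp [rest]
  rw [← hblocks, ← hrest, ← card_product]
  -- A word is determined by its blocks together with its restriction off the range of `f`.
  refine card_le_card_of_injOn (fun x => (fun k j => x (f (k, j)), fun i => x i)) ?_ ?_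
  · intro x hx
    simp_all [blocks, rest]
  · intro x _ y _ hxy
    obtain ⟨hblocks_eq, hrest_eq⟩ := Prod.ext_iff.mp hxy
    funext i
    by_cases hi : i ∈ Set.range f
    · obtain ⟨⟨k, j⟩, rfl⟩ := hi
      exact congrFun (congrFun hblocks_eq k) j
    · exact congrFun hrest_eq ⟨i, hi⟩

open Classical in
lemma card_filter_blocks_ne_le_one_sub_pow_mul (f : κ × τ ↪ ι) {p : τ → α} (hp : ∀ j, p j ∈ A) :
    (#{x ∈ Fintype.piFinset fun _ : ι => A | ∀ k, (fun j => x (f (k, j))) ≠ p} : ℝ) ≤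
      (1 - 1 / (#A : ℝ) ^ Fintype.card τ) ^ Fintype.card κ * #A ^ Fintype.card ι := by
  have hpos : 0 < #A ^ Fintype.card τ := by
    rw [← card_univ, ← prod_const, ← Fintype.card_piFinset]
    exact card_pos.mpr ⟨p, Fintype.mem_piFinset.mpr hp⟩
  have hι : Fintype.card ι =
      Fintype.card τ * Fintype.card κ + Fintype.card {i // i ∉ Set.range f} := by
    rw [← Fintype.card_congr (Equiv.sumCompl (· ∈ Set.range f)), Fintype.card_sum,
      ← Fintype.card_congr (Equiv.ofInjective f f.injective), Fintype.card_prod, mul_comm]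
  calc (#{x ∈ Fintype.piFinset fun _ : ι => A | ∀ k, (fun j => x (f (k, j))) ≠ p} : ℝ)
    _ ≤ ((#A ^ Fintype.card τ - 1 : ℕ) : ℝ) ^ Fintype.card κ *
          #A ^ Fintype.card {i // i ∉ Set.range f} := by
      exact_mod_cast card_filter_blocks_ne_le f hp
    _ = ((#A : ℝ) ^ Fintype.card τ - 1) ^ Fintype.card κ *
          #A ^ Fintype.card {i // i ∉ Set.range f} := by
      rw [Nat.cast_pred hpos, Nat.cast_pow]
    _ = _ := by
      rw [hι, pow_add, pow_mul, ← mul_assoc, ← mul_pow, sub_mul, one_mul,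
        one_div_mul_cancel (by exact_mod_cast hpos.ne')]

end Blocks

open Classical in
lemma card_not_isDense_le {p : List α} (hp : ∀ a ∈ p, a ∈ A) (n M : ℕ) :
    (#{x ∈ words A n | ¬ IsDense p (M * p.length) x} : ℝ) ≤
      (n + 1 - M * p.length : ℕ) * ((1 - 1 / (#A : ℝ) ^ p.length) ^ M * #A ^ n) := by
  have hstart (a : Fin (n + 1 - M * p.length)) : a + M * p.length ≤ n := by
    have := a.isLt
    omega
  let avoiding (a : Fin (n + 1 - M * p.length)) : Finset (Fin n → α) :=
    {x ∈ Fintype.piFinset fun _ => A | ∀ k, (fun j => x (windowBlocks (hstart a) (k, j))) ≠ p.get}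
  have havoiding (a : Fin (n + 1 - M * p.length)) :
      (#(avoiding a) : ℝ) ≤ (1 - 1 / (#A : ℝ) ^ p.length) ^ M * #A ^ n := by
    have h := card_filter_blocks_ne_le_one_sub_pow_mul (windowBlocks (hstart a))
      fun j => hp _ (p.get_mem j)
    simp only [Fintype.card_fin] at h
    -- The two filters carry different decidability instances.
    convert h
  have hcover : {x ∈ Fintype.piFinset fun _ : Fin n => A |
      ¬ IsDense p (M * p.length) (List.ofFn x)} ⊆ univ.biUnion avoiding := by
    intro x hx
    obtain ⟨hxA, hdense⟩ := mem_filter.mp hx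
    contrapose! hdense
    refine isDense_ofFn_of_forall_exists_block_eq fun a ha => ?_
    by_contra! hne
    exact hdense (mem_biUnion.mpr ⟨⟨a, by omega⟩, mem_univ _, mem_filter.mpr ⟨hxA, hne⟩⟩)
  rw [words, filter_map, card_map]
  calc (#{x ∈ Fintype.piFinset fun _ : Fin n => A |
        ¬ IsDense p (M * p.length) (List.ofFn x)} : ℝ)
    _ ≤ ∑ a, (#(avoiding a) : ℝ) := by
      exact_mod_cast (card_le_card hcover).trans card_biUnion_le
    _ ≤ ∑ _a : Fin (n + 1 - M * p.length), (1 - 1 / (#A : ℝ) ^ p.length) ^ M * #A ^ n :=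
      sum_le_sum fun a _ => havoiding a
    _ = _ := by simp

end Counting

lemma two_mul_two_pow_le_exp_add_two (L : ℕ) : 2 * (2 : ℝ) ^ L ≤ Real.exp L + 2 := by
  obtain hL | hL := lt_or_ge L 2
  · interval_cases L
    · norm_num
    · rw [Nat.cast_one]
      linarith [Real.exp_one_gt_d9]
  induction L, hL using Nat.le_induction with
  | base =>
    rw [← Real.exp_one_pow]
    nlinarith [Real.exp_one_gt_d9]
  | succ L hL ih =>
    have hpow : (2 : ℝ) ^ 2 ≤ 2 ^ L := pow_le_pow_right₀ one_le_two hL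
    rw [Nat.cast_succ, Real.exp_add, pow_succ]
    nlinarith [Real.exp_one_gt_d9]

lemma two_mul_mul_one_sub_pow_le_one {N L W : ℕ} (hN : 1 ≤ N) (hW : W + 1 ≤ 2 ^ L) :
    2 * W * (1 - 1 / (N : ℝ)) ^ (N * L) ≤ 1 := by
  have hW' : (W : ℝ) + 1 ≤ 2 ^ L := by exact_mod_cast hW
  have hN' : (1 : ℝ) ≤ N := by exact_mod_cast hN
  have hbase : 0 ≤ 1 - 1 / (N : ℝ) := sub_nonneg.mpr (div_le_one_of_le₀ hN' (by positivity))
  have hdecay : (1 - 1 / (N : ℝ)) ^ (N * L) ≤ Real.exp (-L) := by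
    rw [pow_mul, ← mul_neg_one, Real.exp_nat_mul]
    exact pow_le_pow_left₀ (pow_nonneg hbase _) (Real.one_sub_div_pow_le_exp_neg hN') L
  calc 2 * W * (1 - 1 / (N : ℝ)) ^ (N * L)
    _ ≤ Real.exp L * Real.exp (-L) := by
      gcongr
      linarith [two_mul_two_pow_le_exp_add_two L]
    _ = 1 := by rw [← Real.exp_add, add_neg_cancel, Real.exp_zero]

open Classical in
lemma card_words_le_two_mul_card_isDense {α : Type*} {A : Finset α} (hA : 2 ≤ #A) {n : ℕ}
    (hn : 2 ≤ n) {p : List α} (hp : p ≠ []) (hpA : ∀ a ∈ p, a ∈ A) :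
    #A ^ n ≤
      2 * #{x ∈ words A n | IsDense p (#A ^ p.length * Nat.clog 2 n * p.length) x} := by
  set N := #A ^ p.length with hN
  set L := Nat.clog 2 n
  set bad := {x ∈ words A n | ¬ IsDense p (N * L * p.length) x} with hbad
  have hplen : 1 ≤ p.length := List.length_pos_iff.mpr hp
  have hN2 : 2 ≤ N := hA.trans (Nat.le_self_pow (by omega) _)
  have hL : 1 ≤ L := Nat.clog_pos one_lt_two hn
  have hwindow : 2 ≤ N * L * p.length := by nlinarith [Nat.mul_le_mul hN2 hL]
  have hnL : n ≤ 2 ^ L := Nat.le_pow_clog one_lt_two n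
  have hhalf : 2 * #bad ≤ #A ^ n := by
    have hunion := card_not_isDense_le hpA n (N * L)
    rw [← Nat.cast_pow, ← hN] at hunion
    have hfew := two_mul_mul_one_sub_pow_le_one (N := N) (L := L) (W := n + 1 - N * L * p.length)
      (by omega) (by omega)
    have : (2 * #bad : ℝ) ≤ #A ^ n := by
      calc (2 * #bad : ℝ)
        _ ≤ 2 * ((n + 1 - N * L * p.length : ℕ) * ((1 - 1 / (N : ℝ)) ^ (N * L) * #A ^ n)) := by
          gcongr
        _ = 2 * (n + 1 - N * L * p.length : ℕ) * (1 - 1 / (N : ℝ)) ^ (N * L) * #A ^ n := by ring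
        _ ≤ 1 * #A ^ n := by gcongr
        _ = #A ^ n := one_mul _
    exact_mod_cast this
  have hsplit : #{x ∈ words A n | IsDense p (N * L * p.length) x} + #bad = #A ^ n := by
    rw [hbad, card_filter_add_card_filter_not, card_words]
  omega

theorem exists_dense_encoder_general {α : Type*} {A : Finset α} (hA : 2 ≤ #A) {n : ℕ}
    (hn : 2 ≤ n) {p : List α} (hp : p ≠ []) (hpA : ∀ a ∈ p, a ∈ A) :
    ∃ enc : List α → List α,
      Set.MapsTo enc (words A (n - 1))
        {x | x ∈ words A n ∧ IsDense p (p.length * #A ^ p.length * Nat.clog 2 n) x} ∧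
      Set.InjOn enc (words A (n - 1)) := by
  classical
  rw [mul_assoc, mul_comm p.length]
  have hhalf := card_words_le_two_mul_card_isDense hA hn hp hpA
  have hcard : #(words A (n - 1)) ≤
      #{x ∈ words A n | IsDense p (#A ^ p.length * Nat.clog 2 n * p.length) x} := by
    rw [card_words]
    have hpow : #A ^ n = #A ^ (n - 1) * #A := (pow_sub_one_mul (by omega) _).symm
    nlinarith [Nat.mul_le_mul_left (#A ^ (n - 1)) hA]
  simp only [Set.mapsTo_iff_subset_preimage]
  refine (finite_toSet _).exists_injOn_of_encard_le ?_
  rw [← coe_filter, Set.encard_coe_eq_coe_finsetCard, Set.encard_coe_eq_coe_finsetCard]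
  exact_mod_cast hcard

lemma logb_exp_one_le_two {b : ℝ} (hb : 2 ≤ b) : Real.logb b (Real.exp 1) ≤ 2 := by
  rw [Real.logb_le_iff_le_rpow (by linarith) (Real.exp_pos 1), Real.rpow_two]
  nlinarith [Real.exp_one_lt_three]

lemma le_of_rpow_sub_logb_exp_one_div_le {b s x : ℝ} (hb : 2 ≤ b) (hs : 3 ≤ s)
    (hx : b ^ ((s - Real.logb b (Real.exp 1)) / 0.4) ≤ x) : b ≤ x := by
  refine (Real.self_le_rpow_of_one_le (by linarith) ?_).trans hx
  rw [le_div_iff₀ (by norm_num)]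
  linarith [logb_exp_one_le_two hb]

@[simp]
lemma length_pat (t : ℕ) : (pat t).length = 2 * t := by
  simp [pat, two_mul]

lemma lt_two_of_mem_pat {t a : ℕ} (ha : a ∈ pat t) : a < 2 := by
  simp only [pat, List.mem_append, List.mem_replicate] at ha
  omega

lemma IsDense.pdense {t δ : ℕ} {x : List ℕ} (hx : IsDense (pat t) δ x) : pdense t δ x := by
  intro a ha
  have hw : ((x.drop a).take δ).length = δ := by
    rw [List.length_take, List.length_drop]
    omega
  have hinfix : (x.drop a).take δ <:+: x :=
    (List.take_prefix _ _).isInfix.trans (List.drop_suffix _ _).isInfix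
  obtain ⟨k, hk, hpat⟩ := List.infix_iff_getElem?.mp (hx _ hinfix hw)
  rw [hw, length_pat] at hk
  refine ⟨a + k, by omega, by omega, List.ext_getElem ?_ fun j hj hj' => ?_⟩
  · simp only [List.length_take, List.length_drop, length_pat]
    omega
  · have hget := hpat j hj'
    rw [length_pat] at hj'
    rw [List.getElem?_take_of_lt (by omega), List.getElem?_drop] at hget
    rw [List.getElem_take, List.getElem_drop]
    simpa [add_comm, add_left_comm] using (List.getElem?_eq_some_iff.mp hget).2

/-- Lemma 5: with `δ = 2t·q^{2t}·⌈log₂ n⌉` and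
`n ≥ q^{(6t+3−log_q e)/0.4}`, there is an injective encoder
`EncDen : Σ_q^{n−1} → Σ_q^n` whose image consists of `(p,δ)`-dense strings.
In particular there are at least `q^{n-1}` `(p,δ)`-dense strings in `Σ_q^n`. -/
theorem exists_dense_encoder
    (q t n : ℕ) (hq : 2 ≤ q) (ht : 1 ≤ t)
    (δ : ℕ) (hδ : δ = 2 * t * q ^ (2 * t) * Nat.clog 2 n)
    (hn : (q : ℝ) ^ ((((6 : ℝ) * t + 3) - Real.logb q (Real.exp 1)) / 0.4) ≤ n) :
    ∃ EncDen : List ℕ → List ℕ,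
      (∀ u : List ℕ, u.length = n - 1 → (∀ a ∈ u, a < q) →
        (EncDen u).length = n ∧ (∀ a ∈ EncDen u, a < q) ∧
          pdense t δ (EncDen u)) ∧
      (∀ u u' : List ℕ, u.length = n - 1 → (∀ a ∈ u, a < q) →
        u'.length = n - 1 → (∀ a ∈ u', a < q) →
        EncDen u = EncDen u' → u = u') := by
  have hqn : (q : ℝ) ≤ n := le_of_rpow_sub_logb_exp_one_div_le (by exact_mod_cast hq)
    (by linarith [t.cast_nonneg (α := ℝ)]) hn
  have hn2 : 2 ≤ n := hq.trans (by exact_mod_cast hqn)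
  have hpat : pat t ≠ [] := List.ne_nil_of_length_pos (by rw [length_pat]; omega)
  obtain ⟨enc, hmaps, hinj⟩ := exists_dense_encoder_general (A := range q) (by rwa [card_range])
    hn2 hpat fun a ha => mem_range.mpr ((lt_two_of_mem_pat ha).trans_le hq)
  simp only [Set.MapsTo, Set.InjOn, mem_coe, mem_words, mem_range, Set.mem_ofPred_eq, length_pat,
    card_range, ← hδ] at hmaps hinj
  refine ⟨enc, fun u hu huq => ?_, fun u u' hu huq hu' huq' => hinj ⟨hu, huq⟩ ⟨hu', huq'⟩⟩
  obtain ⟨⟨hlen, hlt⟩, hdense⟩ := hmaps ⟨hu, huq⟩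
  exact ⟨hlen, hlt, hdense.pdense⟩
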